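/- Let S = K[x_1,…,x_n] be a standard graded polynomial ring over a field K of prime characteristic p, and let I ⊂ S be a proper nonzero radical graded ideal. Then for each q = p^e > 1 there exists an associated prime 𝔭 ∈ Ass(I) such that α_q(I) ≥ v(I^{[q]}) − v_𝔭(I). -/

import Mathlib

open MvPolynomial

attribute [local instance] MvPolynomial.gradedAlgebra

noncomputable section

variable {K : Type*} [Field K] {n : ℕ}

/-- The `q`-th Frobenius power `I^{[q]}` of an ideal. -/
def frobPow (I : Ideal (MvPolynomial (Fin n) K)) (q : ℕ) : Ideal (MvPolynomial (Fin n) K) :=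
  Ideal.span ((fun a => a ^ q) '' (I : Set (MvPolynomial (Fin n) K)))

/-- The associated primes of `S/I`. -/
def Ass (I : Ideal (MvPolynomial (Fin n) K)) : Set (Ideal (MvPolynomial (Fin n) K)) :=
  associatedPrimes (MvPolynomial (Fin n) K) (MvPolynomial (Fin n) K ⧸ I)

/-- The v-number of a graded ideal. -/
def vnum (I : Ideal (MvPolynomial (Fin n) K)) : ℕ :=
  sInf {d : ℕ | ∃ f : MvPolynomial (Fin n) K, f.IsHomogeneous d ∧
    ∃ 𝔭 ∈ Ass I, I.colon (Ideal.span {f}) = 𝔭}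

/-- The local v-number `v_𝔭(I)`. -/
def vnumLocal (I 𝔭 : Ideal (MvPolynomial (Fin n) K)) : ℕ :=
  sInf {d : ℕ | ∃ f : MvPolynomial (Fin n) K, f.IsHomogeneous d ∧
    I.colon (Ideal.span {f}) = 𝔭}

/-- The invariant `α_q(I)`. -/
def alphaq (I : Ideal (MvPolynomial (Fin n) K)) (q : ℕ) : ℕ :=
  sInf {d : ℕ | ∃ f : MvPolynomial (Fin n) K, f.IsHomogeneous d ∧
    f ∈ (frobPow I q).colon I ∧ f ∉ frobPow I q}

/-- The height of an ideal: the minimal height of an associated prime. -/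
def heightI (I : Ideal (MvPolynomial (Fin n) K)) : ℕ :=
  sInf {h : ℕ | ∃ 𝔭 ∈ Ass I, ∃ h𝔭 : 𝔭.IsPrime,
    Order.height (⟨𝔭, h𝔭⟩ : PrimeSpectrum (MvPolynomial (Fin n) K)) = (h : ℕ∞)}

/-- The big height of an ideal: the maximal height of an associated prime. -/
def bightI (I : Ideal (MvPolynomial (Fin n) K)) : ℕ :=
  sSup {h : ℕ | ∃ 𝔭 ∈ Ass I, ∃ h𝔭 : 𝔭.IsPrime,
    Order.height (⟨𝔭, h𝔭⟩ : PrimeSpectrum (MvPolynomial (Fin n) K)) = (h : ℕ∞)}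

/-- A graded (homogeneous) ideal with respect to the standard grading. -/
def IsGraded (I : Ideal (MvPolynomial (Fin n) K)) : Prop :=
  Ideal.IsHomogeneous (homogeneousSubmodule (Fin n) K) I

/-- A monomial ideal. -/
def IsMonomialIdeal (I : Ideal (MvPolynomial (Fin n) K)) : Prop :=
  ∃ s : Set (Fin n →₀ ℕ), I = Ideal.span ((fun a => monomial a (1 : K)) '' s)

universe u

lemma field_coords {K : Type u} [Field K] (p : ℕ) (hp : p.Prime) [CharP K p] (e : ℕ) :
    ∃ (ι : Type u) (b : ι → K) (l : ι → K →+ K),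
      (∀ j r c, l j (r ^ p ^ e * c) = r * l j c) ∧
      ∀ c, ∃ T : Finset ι, (∀ j, j ∉ T → l j c = 0) ∧ c = ∑ j ∈ T, (l j c) ^ p ^ e * b j := by
  have : Fact p.Prime := ⟨hp⟩
  let F := iterateFrobenius K p e
  let E : K ≃+* F.fieldRange :=
    RingEquiv.ofBijective F.rangeRestrictField
      ⟨F.rangeRestrictField.injective, fun ⟨x, y, hy⟩ => ⟨y, Subtype.ext hy⟩⟩
  have hE : ∀ x : F.fieldRange, (E.symm x) ^ p ^ e = (x : K) := by
    intro x
    have h : ((E (E.symm x) : F.fieldRange) : K) = x := by rw [E.apply_symm_apply]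
    exact h
  let B := Module.Basis.ofVectorSpace F.fieldRange K
  refine ⟨_, B, fun j => E.symm.toAddMonoidHom.comp
    ((Finsupp.applyAddHom j).comp B.repr.toLinearMap.toAddMonoidHom), ?_, ?_⟩
  · intro j r c
    have h : r ^ p ^ e * c = (E r) • c := rfl
    rw [h]
    simp
  · intro c
    refine ⟨(B.repr c).support, ?_, ?_⟩
    · intro j hj
      have : B.repr c j = 0 := by simpa using hj
      simp [this]
    · conv_lhs => rw [← B.linearCombination_repr c, Finsupp.linearCombination_apply, Finsupp.sum]
      refine Finset.sum_congr rfl fun j _ => ?_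
      have := hE (B.repr c j)
      simp only [AddMonoidHom.comp_apply]
      change _ = (E.symm (B.repr c j)) ^ p ^ e * B j
      rw [this]; rfl

/-- The Cartier-type coordinate map. -/
def phi (q : ℕ) (hq : 0 < q) (l : K →+ K) (m : Fin n →₀ ℕ) :
    MvPolynomial (Fin n) K →+ MvPolynomial (Fin n) K where
  toFun f := AddMonoidAlgebra.ofCoeff (Finsupp.comapDomain (fun a => q • a + m)
    (Finsupp.mapRange l (map_zero l) (AddMonoidAlgebra.coeff f)) (by
      intro a _ b _ h
      have h' : q • a = q • b := add_right_cancel h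
      ext i
      have := DFunLike.congr_fun h' i
      simpa [hq.ne'] using this))
  map_zero' := by
    ext a; simp [MvPolynomial.coeff]
  map_add' f g := by
    ext a
    change l ((AddMonoidAlgebra.coeff (f + g)) (q • a + m)) =
      l ((AddMonoidAlgebra.coeff f) (q • a + m)) + l ((AddMonoidAlgebra.coeff g) (q • a + m))
    simp

lemma coeff_phi (q : ℕ) (hq : 0 < q) (l : K →+ K) (m a : Fin n →₀ ℕ)
    (f : MvPolynomial (Fin n) K) :
    coeff a (phi q hq l m f) = l (coeff (q • a + m) f) := rfl

lemma le_iff_aux (q : ℕ) (b a m : Fin n →₀ ℕ) (hm : ∀ i, m i < q) :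
    q • b ≤ q • a + m ↔ b ≤ a := by
  simp only [Finsupp.le_def, Finsupp.add_apply, Finsupp.smul_apply, smul_eq_mul]
  refine forall_congr' fun i => ⟨fun h => ?_, fun h => ?_⟩
  · by_contra! hc
    have := hm i
    have : q * (a i + 1) ≤ q * b i := Nat.mul_le_mul_left _ hc
    linarith
  · have := Nat.mul_le_mul_left q h
    omega

lemma phi_mul (p : ℕ) (hp : p.Prime) [CharP K p] (e : ℕ) (hq : 0 < p ^ e) (l : K →+ K)
    (hl : ∀ r c, l (r ^ p ^ e * c) = r * l c)
    (m : Fin n →₀ ℕ) (hm : ∀ i, m i < p ^ e) (g c : MvPolynomial (Fin n) K) :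
    phi (p ^ e) hq l m (g ^ p ^ e * c) = g * phi (p ^ e) hq l m c := by
  have : Fact p.Prime := ⟨hp⟩
  have : ExpChar (MvPolynomial (Fin n) K) p := ExpChar.prime hp
  induction g using MvPolynomial.induction_on' with
  | add a b ha hb =>
    rw [add_pow_expChar_pow, add_mul, map_add, ha, hb, add_mul]
  | monomial b r =>
    ext a
    rw [coeff_phi, monomial_pow, coeff_monomial_mul', coeff_monomial_mul']
    simp only [le_iff_aux _ _ _ _ hm]
    split_ifs with h
    · rw [hl, coeff_phi]
      congr 3
      ext i
      have := Nat.mul_le_mul_left (p ^ e) (h i)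
      simp [Nat.mul_sub]
      omega
    · simp

lemma phi_monomial (q : ℕ) (hq : 0 < q) (l : K →+ K) (m d : Fin n →₀ ℕ) (c : K)
    (hm : ∀ i, m i < q) (a : Fin n →₀ ℕ) (m' : Fin n →₀ ℕ) (hm' : ∀ i, m' i < q)
    (hd : d = q • a + m') :
    phi q hq l m (monomial d c) = if m = m' then monomial a (l c) else 0 := by
  subst hd
  have key : ∀ x : Fin n →₀ ℕ, q • a + m' = q • x + m → m' = m ∧ a = x := by
    intro x h
    have h1 : ∀ i, m' i = m i ∧ a i = x i := by
      intro i
      have := DFunLike.congr_fun h i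
      simp only [Finsupp.add_apply, Finsupp.smul_apply, smul_eq_mul] at this
      have h2 := congrArg (· % q) this
      simp only [Nat.mul_add_mod, Nat.mod_eq_of_lt (hm i), Nat.mod_eq_of_lt (hm' i)] at h2
      rw [h2] at this
      exact ⟨h2, Nat.eq_of_mul_eq_mul_left hq (add_right_cancel this)⟩
    exact ⟨Finsupp.ext fun i => (h1 i).1, Finsupp.ext fun i => (h1 i).2⟩
  ext x
  rw [coeff_phi, coeff_monomial]
  by_cases h : m = m'
  · subst h
    rw [if_pos rfl, coeff_monomial]
    by_cases hx : a = x
    · subst hx; simp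
    · rw [if_neg hx, if_neg (fun h => hx (key x h).2), map_zero]
  · rw [if_neg h, if_neg (fun h' => h (key x h').1.symm), map_zero, coeff_zero]

lemma mem_frobPow_of_phi (p : ℕ) (hp : p.Prime) [CharP K p] (e : ℕ) (hq : 0 < p ^ e)
    {ι : Type*} (b : ι → K) (l : ι → K →+ K)
    (hb : ∀ c, ∃ T : Finset ι, (∀ j, j ∉ T → l j c = 0) ∧ c = ∑ j ∈ T, (l j c) ^ p ^ e * b j)
    (A : Ideal (MvPolynomial (Fin n) K)) (f : MvPolynomial (Fin n) K)
    (hf : ∀ j, ∀ m : Fin n →₀ ℕ, (∀ i, m i < p ^ e) → phi (p ^ e) hq (l j) m f ∈ A) :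
    f ∈ frobPow A (p ^ e) := by
  classical
  have : Fact p.Prime := ⟨hp⟩
  have : ExpChar (MvPolynomial (Fin n) K) p := ExpChar.prime hp
  have main : ∀ g : MvPolynomial (Fin n) K,
      ∃ T0 : Finset (ι × {m : Fin n →₀ ℕ // ∀ i, m i < p ^ e}), ∀ T, T0 ⊆ T →
        g = ∑ x ∈ T, (phi (p ^ e) hq (l x.1) x.2.1 g) ^ p ^ e * monomial x.2.1 (b x.1) := by
    intro g
    induction g using MvPolynomial.induction_on' with
    | add g h ihg ihh =>
      obtain ⟨T1, h1⟩ := ihg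
      obtain ⟨T2, h2⟩ := ihh
      refine ⟨T1 ∪ T2, fun T hT => ?_⟩
      have e1 := h1 T (Finset.union_subset_left hT)
      have e2 := h2 T (Finset.union_subset_right hT)
      conv_lhs => rw [e1, e2]
      rw [← Finset.sum_add_distrib]
      refine Finset.sum_congr rfl fun x _ => ?_
      rw [map_add, add_pow_expChar_pow, add_mul]
    | monomial d c =>
      obtain ⟨T, hT0, hT⟩ := hb c
      let m' : Fin n →₀ ℕ := Finsupp.mapRange (· % p ^ e) (by simp) d
      let a : Fin n →₀ ℕ := Finsupp.mapRange (· / p ^ e) (by simp) d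
      have hm' : ∀ i, m' i < p ^ e := fun i => Nat.mod_lt _ hq
      have hd : d = p ^ e • a + m' := by
        ext i
        exact (Nat.div_add_mod (d i) (p ^ e)).symm
      have hne : p ^ e ≠ 0 := hq.ne'
      refine ⟨T.image fun j => (j, ⟨m', hm'⟩), fun U hU => ?_⟩
      rw [← Finset.sum_subset hU]
      · rw [Finset.sum_image (fun x _ y _ h => (Prod.ext_iff.1 h).1)]
        conv_lhs => rw [hT, map_sum]
        refine Finset.sum_congr rfl fun j _ => ?_
        rw [phi_monomial _ hq _ m' d c hm' a m' hm' hd, if_pos rfl, monomial_pow, monomial_mul,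
          ← hd]
      · rintro ⟨j, m, hm⟩ _ hx
        rw [phi_monomial _ hq _ m d c hm a m' hm' hd]
        split_ifs with h
        · subst h
          have : j ∉ T := fun hj => hx (Finset.mem_image.2 ⟨j, hj, rfl⟩)
          simp only [hT0 j this, map_zero, zero_pow hne, zero_mul]
        · simp only [zero_pow hne, zero_mul]
  obtain ⟨T, hT⟩ := main f
  rw [hT T subset_rfl]
  refine Ideal.sum_mem _ fun x _ => Ideal.mul_mem_right _ _ (Ideal.subset_span ⟨_, hf x.1 x.2.1 x.2.2, rfl⟩)

/-- If `h` is a nonzerodivisor mod `I` then it is one mod `I^{[q]}`. -/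
lemma frobPow_nzd (p : ℕ) (hp : p.Prime) [CharP K p] (e : ℕ)
    (I : Ideal (MvPolynomial (Fin n) K)) (h : MvPolynomial (Fin n) K)
    (hI : ∀ x, h * x ∈ I → x ∈ I) (f : MvPolynomial (Fin n) K)
    (hf : h * f ∈ frobPow I (p ^ e)) : f ∈ frobPow I (p ^ e) := by
  have hq : 0 < p ^ e := pow_pos hp.pos e
  obtain ⟨ι, b, l, hl, hb⟩ := field_coords (K := K) p hp e
  refine mem_frobPow_of_phi p hp e hq b l hb I f fun j m hm => hI _ ?_
  rw [← phi_mul p hp e hq (l j) (hl j) m hm]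
  have h1 : h ^ p ^ e * f ∈ frobPow I (p ^ e) := by
    obtain ⟨k, hk⟩ := Nat.exists_eq_succ_of_ne_zero hq.ne'
    have : h ^ p ^ e * f = h ^ k * (h * f) := by rw [hk, pow_succ]; ring
    rw [this]
    exact Ideal.mul_mem_left _ _ hf
  have h2 : ∀ g, g ∈ frobPow I (p ^ e) → ∀ c, phi (p ^ e) hq (l j) m (g * c) ∈ I := by
    intro g hg
    unfold frobPow at hg
    induction hg using Submodule.span_induction with
    | mem x hx =>
      obtain ⟨a, ha, rfl⟩ := hx
      intro c
      change phi _ hq _ _ (a ^ p ^ e * c) ∈ I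
      rw [phi_mul p hp e hq (l j) (hl j) m hm a c]
      exact Ideal.mul_mem_right _ _ ha
    | zero => simp
    | add x y _ _ hx hy => intro c; rw [add_mul, map_add]; exact I.add_mem (hx c) (hy c)
    | smul d x hx' hx =>
      intro c
      have := hx (d * c)
      rwa [smul_eq_mul, mul_comm d x, mul_assoc]
  simpa using h2 _ h1 1

/-- A homogeneous ideal not contained in `J` has a homogeneous element outside `J`. -/
lemma exists_homog_not_mem (Q J : Ideal (MvPolynomial (Fin n) K)) (hQ : IsGraded Q)
    (h : ¬ Q ≤ J) : ∃ d, ∃ f : MvPolynomial (Fin n) K, f.IsHomogeneous d ∧ f ∈ Q ∧ f ∉ J := by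
  classical
  by_contra! hc
  refine h fun x hx => ?_
  rw [← DirectSum.sum_support_decompose (homogeneousSubmodule (Fin n) K) x]
  refine Ideal.sum_mem _ fun i _ => ?_
  exact hc i _ ((mem_homogeneousSubmodule _ _).1
    (DirectSum.decompose (homogeneousSubmodule (Fin n) K) x i).2) (hQ i hx)

lemma isGraded_pow (I : Ideal (MvPolynomial (Fin n) K)) (hI : IsGraded I) (k : ℕ) :
    IsGraded (I ^ k) := by
  induction k with
  | zero => rw [pow_zero, Ideal.one_eq_top]; exact Ideal.IsHomogeneous.top _
  | succ k ih => rw [pow_succ]; exact Ideal.IsHomogeneous.mul ih hI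

lemma isGraded_minimalPrime (I P : Ideal (MvPolynomial (Fin n) K)) (hI : IsGraded I)
    (hP : P ∈ I.minimalPrimes) : IsGraded P := by
  have h1 : (P.homogeneousCore (homogeneousSubmodule (Fin n) K)).toIdeal.IsPrime :=
    hP.1.1.homogeneousCore
  have h2 : I ≤ (P.homogeneousCore (homogeneousSubmodule (Fin n) K)).toIdeal := by
    rw [← Ideal.IsHomogeneous.toIdeal_homogeneousCore_eq_self hI]
    exact Ideal.homogeneousCore_mono _ hP.1.2
  have h3 := Ideal.toIdeal_homogeneousCore_le (homogeneousSubmodule (Fin n) K) P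
  exact (Ideal.IsHomogeneous.iff_eq _ _).2 (le_antisymm h3 (hP.2 ⟨h1, h2⟩ h3))

lemma mem_Ass_of_colon (I P : Ideal (MvPolynomial (Fin n) K)) (hP : P.IsPrime)
    (g : MvPolynomial (Fin n) K) (hg : I.colon (Ideal.span {g}) = P) : P ∈ Ass I := by
  refine ⟨hP, Ideal.Quotient.mk I g, ?_⟩
  have : (⊥ : Submodule (MvPolynomial (Fin n) K) (MvPolynomial (Fin n) K ⧸ I)).colon
      {Ideal.Quotient.mk I g} = P := by
    ext x
    rw [← hg, Submodule.mem_colon_singleton, Ideal.mem_colon_span_singleton, Submodule.mem_bot,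
      ← Ideal.Quotient.eq_zero_iff_mem]
    rfl
  rw [this, hP.radical]

lemma exists_local (I P : Ideal (MvPolynomial (Fin n) K)) (hI : IsGraded I) (hrad : I.IsRadical)
    (hP : P ∈ I.minimalPrimes) :
    ∃ d, ∃ g : MvPolynomial (Fin n) K, g.IsHomogeneous d ∧ I.colon (Ideal.span {g}) = P := by
  classical
  have hprime : P.IsPrime := hP.1.1
  have hfin := I.finite_minimalPrimes_of_isNoetherianRing
  have hsInf : sInf I.minimalPrimes = I := by rw [Ideal.sInf_minimalPrimes, hrad.radical]
  have hQP : ¬ sInf (I.minimalPrimes \ {P}) ≤ P := by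
    intro h
    have hfin' : (I.minimalPrimes \ {P}).Finite := hfin.subset Set.sdiff_subset
    rw [← hfin'.coe_toFinset, ← Finset.inf_id_eq_sInf, hprime.inf_le'] at h
    obtain ⟨P', h1, h2⟩ := h
    rw [Set.Finite.mem_toFinset] at h1
    exact h1.2 (le_antisymm h2 (hP.2 h1.1.1 h2))
  obtain ⟨d, g, hgd, hgQ, hgP⟩ := exists_homog_not_mem _ P
    (Ideal.IsHomogeneous.sInf fun P' hP' => isGraded_minimalPrime I P' hI hP'.1) hQP
  refine ⟨d, g, hgd, ?_⟩
  ext x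
  rw [Ideal.mem_colon_span_singleton]
  constructor
  · intro h
    exact (hprime.mem_or_mem (hP.1.2 h)).resolve_right hgP
  · intro h
    rw [← hsInf, Submodule.mem_sInf]
    intro P' hP'
    by_cases hPP : P' = P
    · subst hPP; exact Ideal.mul_mem_right _ _ h
    · exact Ideal.mul_mem_left _ _ ((Submodule.mem_sInf.1 hgQ) P' ⟨hP', hPP⟩)

lemma exists_alpha (I : Ideal (MvPolynomial (Fin n) K)) (hI : IsGraded I) (htop : I ≠ ⊤)
    (q : ℕ) (hq : q ≠ 0) :
    ∃ d, ∃ f : MvPolynomial (Fin n) K, f.IsHomogeneous d ∧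
      f ∈ (frobPow I q).colon I ∧ f ∉ frobPow I q := by
  classical
  have hle : frobPow I q ≤ I := by
    refine Ideal.span_le.2 ?_
    rintro _ ⟨a, ha, rfl⟩
    exact Ideal.pow_mem_of_mem I ha q (Nat.pos_of_ne_zero hq)
  have hex : ∃ k, I ^ k ≤ frobPow I q := by
    refine Ideal.exists_pow_le_of_le_radical_of_fg (fun x hx => ⟨q, ?_⟩)
      (IsNoetherian.noetherian I)
    exact Ideal.subset_span ⟨x, hx, rfl⟩
  have h0 : Nat.find hex ≠ 0 := by
    intro h
    have := Nat.find_spec hex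
    rw [h, pow_zero, Ideal.one_eq_top] at this
    exact htop (top_le_iff.1 (this.trans hle))
  obtain ⟨k, hk⟩ := Nat.exists_eq_succ_of_ne_zero h0
  have hk1 : ¬ I ^ k ≤ frobPow I q := Nat.find_min hex (by omega)
  have hk2 : I ^ (k + 1) ≤ frobPow I q := by
    have := Nat.find_spec hex
    rwa [hk] at this
  obtain ⟨d, f, hd, hf, hf'⟩ := exists_homog_not_mem _ _ (isGraded_pow I hI k) hk1
  refine ⟨d, f, hd, Submodule.mem_colon.2 fun s hs => hk2 ?_, hf'⟩
  rw [pow_succ]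
  exact Ideal.mul_mem_mul hf hs

theorem stmt17 {K : Type*} [Field K] {n : ℕ} (p : ℕ) (hp : p.Prime) [CharP K p]
    (I : Ideal (MvPolynomial (Fin n) K)) (hgr : IsGraded I) (htop : I ≠ ⊤) (hbot : I ≠ ⊥)
    (hrad : I.IsRadical)
    (q : ℕ) (hq : ∃ e : ℕ, q = p ^ e) (hq1 : 1 < q) :
    ∃ 𝔭 ∈ Ass I, (vnum (frobPow I q) : ℤ) - (vnumLocal I 𝔭 : ℤ) ≤ (alphaq I q : ℤ) := by
  classical
  obtain ⟨f, hfd, hfI, hf⟩ := Nat.sInf_mem (exists_alpha I hgr htop q (by omega))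
  change f.IsHomogeneous (alphaq I q) at hfd
  have hfin := I.finite_minimalPrimes_of_isNoetherianRing
  have hsInf : sInf I.minimalPrimes = I := by rw [Ideal.sInf_minimalPrimes, hrad.radical]
  have hJ : ∃ P ∈ hfin.toFinset, (frobPow I q).colon (Ideal.span {f}) ≤ P := by
    rw [← Ideal.subset_union_prime (f := fun P => P) ⊥ ⊥
      (fun P hP _ _ => ((hfin.mem_toFinset).1 hP).1.1)]
    intro h hh
    by_contra hc
    have hc' : ∀ P ∈ I.minimalPrimes, h ∉ P := by
      intro P hP hhP
      exact hc (Set.mem_biUnion (x := P) (by simpa using hP) hhP)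
    have hh' : h * f ∈ frobPow I q := Ideal.mem_colon_span_singleton.1 hh
    obtain ⟨e, rfl⟩ := hq
    refine hf (frobPow_nzd p hp e I h (fun x hx => ?_) f hh')
    rw [← hsInf, Submodule.mem_sInf]
    intro P hP
    exact (hP.1.1.mem_or_mem (hP.1.2 hx)).resolve_left (hc' P hP)
  obtain ⟨P, hP, hPJ⟩ := hJ
  rw [Set.Finite.mem_toFinset] at hP
  have hprime : P.IsPrime := hP.1.1
  obtain ⟨g, hgd, hg⟩ := Nat.sInf_mem (exists_local I P hgr hrad hP)
  change g.IsHomogeneous (vnumLocal I P) at hgd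
  have hgmem : ∀ x, x ∈ P ↔ x * g ∈ I := by
    intro x; rw [← hg, Ideal.mem_colon_span_singleton]
  have hgP : g ∉ P := by
    intro h
    have h2 : g ∈ I := hrad ⟨2, by rw [pow_two]; exact (hgmem g).1 h⟩
    exact hprime.ne_top ((Ideal.eq_top_iff_one _).2 ((hgmem 1).2 (by rwa [one_mul])))
  refine ⟨P, mem_Ass_of_colon I P hprime g hg, ?_⟩
  have key : (frobPow I q).colon (Ideal.span {f * g}) = P := by
    ext x
    rw [Ideal.mem_colon_span_singleton]
    constructor
    · intro h
      have : x * g ∈ (frobPow I q).colon (Ideal.span {f}) := by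
        rw [Ideal.mem_colon_span_singleton]
        convert h using 1
        ring
      exact (hprime.mem_or_mem (hPJ this)).resolve_right hgP
    · intro h
      have := Submodule.mem_colon.1 hfI _ ((hgmem x).1 h)
      rw [smul_eq_mul] at this
      convert this using 1
      ring
  have : vnum (frobPow I q) ≤ alphaq I q + vnumLocal I P :=
    Nat.sInf_le ⟨f * g, hfd.mul hgd, P, mem_Ass_of_colon _ P hprime _ key, key⟩
  omega

end
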